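/- arXiv:2203.09851 — 2 statements merged into one kernel-verified Lean document; each statement's English description precedes it below -/
import Mathlib

section
/- Uniform bounds on the discrete gradients (Lemma 3.3): for all T > 0, L ≥ 0, g₀ ≥ 0, A > 0, B ≥ 0 and D ≥ 0 there exist constants C ≥ 0 (depending only on T, L, g₀, A, B) and C' ≥ 0 (depending additionally on D) such that for every N ≥ 1, every discrete setting (V, m, τ) with Σ_{K∈V} m K ≤ A, every g Lipschitz with constant L and |g(0)| ≤ g₀, and every initial datum with E[‖u⁰‖_m²] ≤ B, one has ∫₀^T E[|u^r(t)|₁²] dt = Δt·Σ_{k=0}^{N−1} E[|u^{k+1}|₁²] ≤ C, and if moreover E[|u⁰|₁²] ≤ D then ∫₀^T E[|u^l(t)|₁²] dt ≤ C'. -/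
open MeasureTheory ProbabilityTheory

/-- Discrete `L²` norm squared: `‖w‖_m² = Σ_K m K · (w K)²`. -/
noncomputable def normSq {V : Type} [Fintype V] (m : V → ℝ) (w : V → ℝ) : ℝ :=
  ∑ K, m K * w K ^ 2

/-- Discrete `H¹` seminorm squared: `|w|₁² = (1/2) Σ_K Σ_L τ K L · (w K − w L)²`. -/
noncomputable def seminormSq {V : Type} [Fintype V] (τ : V → V → ℝ) (w : V → ℝ) : ℝ :=
  (1 / 2) * ∑ K, ∑ L, τ K L * (w K - w L) ^ 2

/-- The semi-implicit finite-volume scheme for the stochastic heat equation, in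
abstract graph form, together with all the structural assumptions of the paper:
cell measures `m`, symmetric nonnegative transmissibilities `τ`, time horizon
`T > 0` divided into `N ≥ 1` steps of size `Δt = T/N`, a discrete filtration
`G`, Gaussian increments `ΔW` (each `ΔW (n+1)` is `G (n+1)`-measurable,
independent of `G n`, centred with variance `Δt`), a Lipschitz nonlinearity `g`
(constant `L`), a square-integrable `G 0`-measurable initial datum `u 0`, and the
scheme equations defining `u (n+1)` from `u n`. -/
structure Scheme (V : Type) [Fintype V] [Nonempty V]
    (Ω : Type) [mΩ : MeasurableSpace Ω]
    (T L : ℝ) (g : ℝ → ℝ) (N : ℕ) where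
  P : Measure Ω
  probP : IsProbabilityMeasure P
  m : V → ℝ
  m_pos : ∀ K, 0 < m K
  τ : V → V → ℝ
  τ_symm : ∀ K L', τ K L' = τ L' K
  τ_nonneg : ∀ K L', 0 ≤ τ K L'
  τ_diag : ∀ K, τ K K = 0
  T_pos : 0 < T
  N_pos : 1 ≤ N
  L_nonneg : 0 ≤ L
  g_lip : ∀ r s : ℝ, |g r - g s| ≤ L * |r - s|
  G : ℕ → MeasurableSpace Ω
  G_le : ∀ n, G n ≤ mΩ
  G_mono : Monotone G
  ΔW : ℕ → Ω → ℝ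
  ΔW_meas : ∀ n, n < N → Measurable[G (n + 1)] (ΔW (n + 1))
  ΔW_indep : ∀ n, n < N →
    Indep (MeasurableSpace.comap (ΔW (n + 1)) Real.measurableSpace) (G n) P
  ΔW_law : ∀ n, n < N →
    P.map (ΔW (n + 1)) = gaussianReal 0 (Real.toNNReal (T / N))
  u : ℕ → Ω → V → ℝ
  u_meas : ∀ n, n ≤ N → Measurable[G n] (u n)
  u0_int : Integrable (fun ω => normSq m (u 0 ω)) P
  scheme : ∀ n, n < N → ∀ᵐ ω ∂P, ∀ K,
    m K / (T / N) * (u (n + 1) ω K - u n ω K)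
      + ∑ L', τ K L' * (u (n + 1) ω K - u (n + 1) ω L')
      = m K / (T / N) * g (u n ω K) * ΔW (n + 1) ω

/-- Index `n` of the time interval `[t_n, t_{n+1})` containing `t` (capped at
`N − 1`, so that at `t = T` the value agrees with the convention
`u^l(T) = u^{N−1}`, `u^r(T) = u^N`). -/
noncomputable def timeIdx (T : ℝ) (N : ℕ) (t : ℝ) : ℕ :=
  min (Nat.floor (t / (T / N))) (N - 1)

/-- Left piecewise-constant time interpolant `u^l`. -/
noncomputable def ul {Ω V : Type} (T : ℝ) (N : ℕ)
    (u : ℕ → Ω → V → ℝ) (t : ℝ) (ω : Ω) : V → ℝ :=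
  u (timeIdx T N t) ω

/-- Right piecewise-constant time interpolant `u^r`. -/
noncomputable def ur {Ω V : Type} (T : ℝ) (N : ℕ)
    (u : ℕ → Ω → V → ℝ) (t : ℝ) (ω : Ω) : V → ℝ :=
  u (timeIdx T N t + 1) ω

lemma sum_by_parts {V : Type} [Fintype V] (τ : V → V → ℝ)
    (hs : ∀ K L, τ K L = τ L K) (a : V → ℝ) :
    ∑ K, a K * ∑ L, τ K L * (a K - a L) = seminormSq τ a := by
  have h1 : ∑ K, a K * ∑ L, τ K L * (a K - a L)
      = ∑ K, ∑ L, a K * (τ K L * (a K - a L)) := by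
    simp only [Finset.mul_sum]
  have h2 : ∑ K, ∑ L, a K * (τ K L * (a K - a L))
      = ∑ K, ∑ L, a L * (τ K L * (a L - a K)) := by
    rw [Finset.sum_comm]
    refine Finset.sum_congr rfl fun K _ => Finset.sum_congr rfl fun L _ => ?_
    rw [hs L K]
  have h3 : ∑ K, ∑ L, τ K L * (a K - a L) ^ 2
      = ∑ K, ∑ L, a K * (τ K L * (a K - a L)) + ∑ K, ∑ L, a L * (τ K L * (a L - a K)) := by
    simp only [← Finset.sum_add_distrib]
    refine Finset.sum_congr rfl fun K _ => Finset.sum_congr rfl fun L _ => ?_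
    ring
  unfold seminormSq
  rw [h1, h3, ← h2]; ring

lemma energy {V : Type} [Fintype V] (m : V → ℝ) (hm : ∀ K, 0 < m K) (τ : V → V → ℝ)
    (hs : ∀ K L, τ K L = τ L K) (h : ℝ) (hh : 0 < h) (a b c : V → ℝ) (w : ℝ)
    (e : ∀ K, m K / h * (a K - b K) + ∑ L, τ K L * (a K - a L) = m K / h * c K * w) :
    normSq m a + 2 * h * seminormSq τ a
      ≤ normSq m b + ∑ K, m K * (c K ^ 2 * w ^ 2) + 2 * ∑ K, m K * ((c K * b K) * w) := by
  rw [← sum_by_parts τ hs a]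
  unfold normSq
  simp only [Finset.mul_sum (s := Finset.univ) (a := (2 : ℝ)),
    Finset.mul_sum (s := Finset.univ) (a := (2 : ℝ) * h), ← Finset.sum_add_distrib]
  refine Finset.sum_le_sum fun K _ => ?_
  have e' : h * ∑ L, τ K L * (a K - a L) = m K * (c K * w - (a K - b K)) := by
    have := e K
    have h2 : ∑ L, τ K L * (a K - a L) = m K / h * c K * w - m K / h * (a K - b K) := by linarith
    rw [h2]; field_simp
  have : 2 * h * (a K * ∑ L, τ K L * (a K - a L))
      = 2 * a K * (m K * (c K * w - (a K - b K))) := by rw [← e']; ring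
  rw [this]
  nlinarith [mul_nonneg (hm K).le (sq_nonneg (a K - b K - c K * w))]

lemma seminormSq_nonneg {V : Type} [Fintype V] (τ : V → V → ℝ)
    (h0 : ∀ K L, 0 ≤ τ K L) (a : V → ℝ) : 0 ≤ seminormSq τ a := by
  unfold seminormSq
  have : 0 ≤ ∑ K, ∑ L, τ K L * (a K - a L) ^ 2 :=
    Finset.sum_nonneg fun K _ => Finset.sum_nonneg fun L _ => mul_nonneg (h0 K L) (sq_nonneg _)
  linarith

lemma normSq_nonneg {V : Type} [Fintype V] (m : V → ℝ)
    (h0 : ∀ K, 0 < m K) (a : V → ℝ) : 0 ≤ normSq m a :=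
  Finset.sum_nonneg fun K _ => mul_nonneg (h0 K).le (sq_nonneg _)

lemma memLp_of_normSq {V : Type} [Fintype V] {Ω : Type} [MeasurableSpace Ω] (P : Measure Ω)
    (m : V → ℝ) (hm : ∀ K, 0 < m K) (u : Ω → V → ℝ) (hu : Measurable u)
    (hi : Integrable (fun ω => normSq m (u ω)) P) (K : V) : MemLp (fun ω => u ω K) 2 P := by
  have hK : Measurable fun ω => u ω K := (measurable_pi_apply K).comp hu
  rw [memLp_two_iff_integrable_sq hK.aestronglyMeasurable]
  refine (hi.const_mul (m K)⁻¹).mono' (hK.pow_const 2).aestronglyMeasurable ?_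
  filter_upwards with ω
  rw [Real.norm_of_nonneg (sq_nonneg _), le_inv_mul_iff₀ (hm K)]
  exact Finset.single_le_sum (f := fun K => m K * u ω K ^ 2)
    (fun K _ => mul_nonneg (hm K).le (sq_nonneg _)) (Finset.mem_univ K)

lemma integrable_seminormSq {V : Type} [Fintype V] {Ω : Type} [MeasurableSpace Ω] (P : Measure Ω)
    (τ : V → V → ℝ) (u : Ω → V → ℝ) (h : ∀ K, MemLp (fun ω => u ω K) 2 P) :
    Integrable (fun ω => seminormSq τ (u ω)) P := by
  unfold seminormSq
  refine Integrable.const_mul ?_ _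
  refine integrable_finset_sum _ fun K _ => integrable_finset_sum _ fun L _ => ?_
  exact (((h K).sub (h L)).integrable_sq).const_mul _

lemma step {V : Type} [Fintype V] [Nonempty V] {Ω : Type} [MeasurableSpace Ω]
    {T L : ℝ} {g : ℝ → ℝ} {N : ℕ} (S : Scheme V Ω T L g N) (g₀ A : ℝ)
    (hg : |g 0| ≤ g₀) (hA : (∑ K, S.m K) ≤ A) (n : ℕ) (hn : n < N)
    (hi : Integrable (fun ω => normSq S.m (S.u n ω)) S.P) :
    Integrable (fun ω => normSq S.m (S.u (n + 1) ω)) S.P ∧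
    (∫ ω, normSq S.m (S.u (n + 1) ω) ∂S.P)
      + 2 * (T / N) * ∫ ω, seminormSq S.τ (S.u (n + 1) ω) ∂S.P
      ≤ (1 + T / N * (2 * L ^ 2)) * (∫ ω, normSq S.m (S.u n ω) ∂S.P)
        + T / N * (2 * g₀ ^ 2 * A) := by
  haveI := S.probP
  have hh : 0 < T / N := div_pos S.T_pos (by exact_mod_cast S.N_pos)
  set h := T / (N : ℝ) with hdef
  have mu : Measurable (S.u n) := (S.u_meas n hn.le).mono (S.G_le _) le_rfl
  have mu' : Measurable (S.u (n + 1)) := (S.u_meas (n + 1) hn).mono (S.G_le _) le_rfl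
  have mW : Measurable (S.ΔW (n + 1)) := (S.ΔW_meas n hn).mono (S.G_le _) le_rfl
  have gc : Continuous g := by
    have : LipschitzWith (Real.toNNReal L) g := LipschitzWith.of_dist_le_mul fun x y => by
      rw [Real.dist_eq, Real.dist_eq, Real.coe_toNNReal _ S.L_nonneg]; exact S.g_lip x y
    exact this.continuous
  have gm : Measurable g := gc.measurable
  have ind : IndepFun (S.u n) (S.ΔW (n + 1)) S.P := by
    refine IndepFun.symm ?_
    rw [IndepFun_iff_Indep]
    exact indep_of_indep_of_le_right (S.ΔW_indep n hn) (S.u_meas n hn.le).comap_le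
  -- Gaussian moments
  have W2 : MemLp (S.ΔW (n + 1)) 2 S.P := by
    have := memLp_id_gaussianReal' (μ := 0) (v := Real.toNNReal h) 2 (by norm_num)
    rw [← S.ΔW_law n hn] at this
    exact this.comp_of_map mW.aemeasurable
  have W1 : ∫ ω, S.ΔW (n + 1) ω ∂S.P = 0 := by
    have := integral_id_gaussianReal (μ := 0) (v := Real.toNNReal h)
    rw [← S.ΔW_law n hn, integral_map mW.aemeasurable (by fun_prop)] at this
    exact this
  have WV : ∫ ω, S.ΔW (n + 1) ω ^ 2 ∂S.P = h := by
    have := variance_id_gaussianReal (μ := 0) (v := Real.toNNReal h)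
    rw [variance_of_integral_eq_zero aemeasurable_id (by simp [integral_id_gaussianReal]),
      ← S.ΔW_law n hn, integral_map mW.aemeasurable (by fun_prop),
      Real.coe_toNNReal _ hh.le] at this
    exact this
  have uL := memLp_of_normSq S.P S.m S.m_pos _ mu hi
  have gsq : ∀ r, g r ^ 2 ≤ 2 * L ^ 2 * r ^ 2 + 2 * g₀ ^ 2 := by
    intro r
    have h1 := S.g_lip r 0
    rw [sub_zero] at h1
    have h2 : (g r - g 0) ^ 2 ≤ L ^ 2 * r ^ 2 := by
      rw [← sq_abs (g r - g 0), ← sq_abs r, ← mul_pow]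
      exact pow_le_pow_left₀ (abs_nonneg _) h1 2
    have h3 : g 0 ^ 2 ≤ g₀ ^ 2 := by
      rw [← sq_abs (g 0)]; exact pow_le_pow_left₀ (abs_nonneg _) hg 2
    nlinarith [sq_nonneg (g r - g 0 - g 0)]
  have muK : ∀ K, Measurable fun ω => S.u n ω K := fun K => (measurable_pi_apply K).comp mu
  have guI : ∀ K, Integrable (fun ω => g (S.u n ω K) ^ 2) S.P := by
    intro K
    refine (((uL K).integrable_sq.const_mul (2 * L ^ 2)).add
      (integrable_const (2 * g₀ ^ 2))).mono'
      ((gm.comp (muK K)).pow_const 2).aestronglyMeasurable ?_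
    filter_upwards with ω
    rw [Real.norm_of_nonneg (sq_nonneg _)]
    exact gsq _
  have guL : ∀ K, MemLp (fun ω => g (S.u n ω K)) 2 S.P := fun K =>
    (memLp_two_iff_integrable_sq (gm.comp (muK K)).aestronglyMeasurable).2 (guI K)
  have guuI : ∀ K, Integrable (fun ω => g (S.u n ω K) * S.u n ω K) S.P := fun K =>
    (guL K).integrable_mul (uL K)
  have ind2 : ∀ K, IndepFun (fun ω => g (S.u n ω K) ^ 2) (fun ω => S.ΔW (n + 1) ω ^ 2) S.P :=
    fun K => ind.comp (φ := fun v : V → ℝ => g (v K) ^ 2) (ψ := fun x : ℝ => x ^ 2)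
      ((gm.comp (measurable_pi_apply K)).pow_const 2) (by fun_prop)
  have ind1 : ∀ K, IndepFun (fun ω => g (S.u n ω K) * S.u n ω K) (S.ΔW (n + 1)) S.P :=
    fun K => ind.comp (φ := fun v : V → ℝ => g (v K) * v K) (ψ := fun x : ℝ => x)
      ((gm.comp (measurable_pi_apply K)).mul (measurable_pi_apply K)) measurable_id
  have I2 : ∀ K, Integrable (fun ω => g (S.u n ω K) ^ 2 * S.ΔW (n + 1) ω ^ 2) S.P := fun K =>
    (ind2 K).integrable_mul (guI K) W2.integrable_sq
  have I1 : ∀ K, Integrable (fun ω => (g (S.u n ω K) * S.u n ω K) * S.ΔW (n + 1) ω) S.P := fun K =>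
    (ind1 K).integrable_mul (guuI K) (W2.integrable (by norm_num))
  have E2 : ∀ K, ∫ ω, g (S.u n ω K) ^ 2 * S.ΔW (n + 1) ω ^ 2 ∂S.P
      = (∫ ω, g (S.u n ω K) ^ 2 ∂S.P) * h := fun K => by
    rw [(ind2 K).integral_fun_mul_eq_mul_integral (guI K).aestronglyMeasurable
      W2.integrable_sq.aestronglyMeasurable, WV]
  have E1 : ∀ K, ∫ ω, (g (S.u n ω K) * S.u n ω K) * S.ΔW (n + 1) ω ∂S.P = 0 := fun K => by
    rw [(ind1 K).integral_fun_mul_eq_mul_integral (guuI K).aestronglyMeasurable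
      W2.aestronglyMeasurable, W1, mul_zero]
  have J2 : Integrable (fun ω => ∑ K, S.m K * (g (S.u n ω K) ^ 2 * S.ΔW (n + 1) ω ^ 2)) S.P :=
    integrable_finset_sum _ fun K _ => (I2 K).const_mul _
  have J1 : Integrable (fun ω => ∑ K, S.m K * ((g (S.u n ω K) * S.u n ω K) * S.ΔW (n + 1) ω)) S.P :=
    integrable_finset_sum _ fun K _ => (I1 K).const_mul _
  have F1 : ∫ ω, ∑ K, S.m K * ((g (S.u n ω K) * S.u n ω K) * S.ΔW (n + 1) ω) ∂S.P = 0 := by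
    rw [integral_finset_sum _ fun K _ => (I1 K).const_mul _]
    simp only [integral_const_mul, E1, mul_zero, Finset.sum_const_zero]
  have F2 : ∫ ω, ∑ K, S.m K * (g (S.u n ω K) ^ 2 * S.ΔW (n + 1) ω ^ 2) ∂S.P
      = h * ∫ ω, ∑ K, S.m K * g (S.u n ω K) ^ 2 ∂S.P := by
    rw [integral_finset_sum _ fun K _ => (I2 K).const_mul _,
      integral_finset_sum _ fun K _ => (guI K).const_mul _, Finset.mul_sum]
    refine Finset.sum_congr rfl fun K _ => ?_
    rw [integral_const_mul, integral_const_mul, E2]; ring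
  have F3 : ∫ ω, ∑ K, S.m K * g (S.u n ω K) ^ 2 ∂S.P
      ≤ 2 * L ^ 2 * (∫ ω, normSq S.m (S.u n ω) ∂S.P) + 2 * g₀ ^ 2 * A := by
    have : ∫ ω, ∑ K, S.m K * g (S.u n ω K) ^ 2 ∂S.P
        ≤ ∫ ω, (2 * L ^ 2 * normSq S.m (S.u n ω) + 2 * g₀ ^ 2 * A) ∂S.P := by
      refine integral_mono (integrable_finset_sum _ fun K _ => (guI K).const_mul _)
        ((hi.const_mul _).add (integrable_const _)) fun ω => ?_
      have h1 : ∑ K, S.m K * g (S.u n ω K) ^ 2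
          ≤ ∑ K, (2 * L ^ 2 * (S.m K * S.u n ω K ^ 2) + 2 * g₀ ^ 2 * S.m K) :=
        Finset.sum_le_sum fun K _ => by
          nlinarith [mul_le_mul_of_nonneg_left (gsq (S.u n ω K)) (S.m_pos K).le]
      rw [Finset.sum_add_distrib, ← Finset.mul_sum, ← Finset.mul_sum] at h1
      have h2 : 2 * g₀ ^ 2 * ∑ K, S.m K ≤ 2 * g₀ ^ 2 * A :=
        mul_le_mul_of_nonneg_left hA (by positivity)
      show ∑ K, S.m K * g (S.u n ω K) ^ 2 ≤ 2 * L ^ 2 * normSq S.m (S.u n ω) + 2 * g₀ ^ 2 * A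
      unfold normSq
      linarith
    rw [integral_add (hi.const_mul _) (integrable_const _), integral_const_mul] at this
    simpa using this
  have JR : Integrable (fun ω => normSq S.m (S.u n ω)
      + ∑ K, S.m K * (g (S.u n ω K) ^ 2 * S.ΔW (n + 1) ω ^ 2)
      + 2 * ∑ K, S.m K * ((g (S.u n ω K) * S.u n ω K) * S.ΔW (n + 1) ω)) S.P :=
    (hi.add J2).add (J1.const_mul 2)
  have en : ∀ᵐ ω ∂S.P, normSq S.m (S.u (n + 1) ω) + 2 * h * seminormSq S.τ (S.u (n + 1) ω)
      ≤ normSq S.m (S.u n ω)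
      + ∑ K, S.m K * (g (S.u n ω K) ^ 2 * S.ΔW (n + 1) ω ^ 2)
      + 2 * ∑ K, S.m K * ((g (S.u n ω K) * S.u n ω K) * S.ΔW (n + 1) ω) := by
    filter_upwards [S.scheme n hn] with ω hω
    exact energy S.m S.m_pos S.τ S.τ_symm h hh _ _ (fun K => g (S.u n ω K)) _ hω
  have hi' : Integrable (fun ω => normSq S.m (S.u (n + 1) ω)) S.P := by
    refine JR.mono' ?_ ?_
    · refine Measurable.aestronglyMeasurable ?_
      unfold normSq
      exact Finset.measurable_sum _ fun K _ =>
        (((measurable_pi_apply K).comp mu').pow_const 2).const_mul _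
    · filter_upwards [en] with ω hω
      rw [Real.norm_of_nonneg (normSq_nonneg _ S.m_pos _)]
      have := mul_nonneg (by positivity : 0 ≤ 2 * h)
        (seminormSq_nonneg S.τ S.τ_nonneg (S.u (n + 1) ω))
      linarith
  refine ⟨hi', ?_⟩
  have hs := integrable_seminormSq S.P S.τ _ (memLp_of_normSq S.P S.m S.m_pos _ mu' hi')
  have fin := integral_mono_ae (hi'.add (hs.const_mul (2 * h))) JR en
  have l1 : ∫ ω, ((fun ω => normSq S.m (S.u (n + 1) ω)) +
      fun ω => 2 * h * seminormSq S.τ (S.u (n + 1) ω)) ω ∂S.P = 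
      (∫ ω, normSq S.m (S.u (n + 1) ω) ∂S.P)
      + 2 * h * ∫ ω, seminormSq S.τ (S.u (n + 1) ω) ∂S.P := by
    rw [← integral_const_mul]
    exact integral_add hi' (hs.const_mul (2 * h))
  have l2 := integral_add (hi.add J2) (J1.const_mul 2)
  have l3 := integral_add hi J2
  simp only [Pi.add_apply] at fin l1 l2 l3
  rw [l1, l2, l3, integral_const_mul, F1, F2] at fin
  have := mul_le_mul_of_nonneg_left F3 hh.le
  linarith

lemma gronwall (c d h B : ℝ) (hc : 0 ≤ c) (hd : 0 ≤ d) (hh : 0 ≤ h) (hB : 0 ≤ B)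
    (x y : ℕ → ℝ) (hy : ∀ n, 0 ≤ y n) (hx0 : x 0 ≤ B) (N : ℕ)
    (hs : ∀ n < N, x (n + 1) + 2 * h * y (n + 1) ≤ (1 + h * c) * x n + h * d) :
    ∀ n ≤ N, x n + 2 * h * ∑ k ∈ Finset.range n, y (k + 1)
      ≤ Real.exp (n * (h * c)) * (B + n * (h * d)) := by
  intro n
  induction n with
  | zero => intro _; simpa using hx0
  | succ n ih =>
    intro hn
    have ih := ih (by omega)
    have h1 := hs n (by omega)
    rw [Finset.sum_range_succ]
    set Y := ∑ k ∈ Finset.range n, y (k + 1)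
    have hY : 0 ≤ Y := Finset.sum_nonneg fun k _ => hy _
    have hhc : 0 ≤ h * c := mul_nonneg hh hc
    have hhd : 0 ≤ h * d := mul_nonneg hh hd
    have a1 : x (n + 1) + 2 * h * (Y + y (n + 1)) ≤ (1 + h * c) * (x n + 2 * h * Y) + h * d := by
      nlinarith [mul_nonneg hhc (mul_nonneg hh hY)]
    have e1 : 1 + h * c ≤ Real.exp (h * c) := by linarith [Real.add_one_le_exp (h * c)]
    set E := Real.exp (n * (h * c)) * (B + n * (h * d)) with hE
    have hE0 : 0 ≤ E := by positivity
    have a2 : (1 + h * c) * (x n + 2 * h * Y) ≤ Real.exp (h * c) * E :=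
      (mul_le_mul_of_nonneg_left ih (by linarith)).trans (mul_le_mul_of_nonneg_right e1 hE0)
    have e2 : Real.exp ((n + 1 : ℕ) * (h * c)) = Real.exp (h * c) * Real.exp (n * (h * c)) := by
      rw [← Real.exp_add]; push_cast; ring_nf
    have e3 : 1 ≤ Real.exp ((n + 1 : ℕ) * (h * c)) := Real.one_le_exp (by positivity)
    have e4 : Real.exp ((n + 1 : ℕ) * (h * c)) * (B + (n + 1 : ℕ) * (h * d))
        = Real.exp (h * c) * E + Real.exp ((n + 1 : ℕ) * (h * c)) * (h * d) := by
      rw [hE, e2]; push_cast; ring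
    rw [e4]
    nlinarith [mul_le_mul_of_nonneg_right e3 hhd]

lemma time_int (T : ℝ) (hT : 0 < T) (N : ℕ) (hN : 1 ≤ N) (F : ℕ → ℝ) :
    ∫ t in (0:ℝ)..T, F (timeIdx T N t) = (T / N) * ∑ k ∈ Finset.range N, F k := by
  have hN' : (0:ℝ) < N := by exact_mod_cast hN
  have hh : 0 < T / N := div_pos hT hN'
  have key : ∀ k < N, Set.EqOn (fun t => F (timeIdx T N t)) (fun _ => F k)
      (Set.Ioo ((k:ℝ) * (T / N)) (((k + 1 : ℕ):ℝ) * (T / N))) := by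
    intro k hk t ht
    have : Nat.floor (t / (T / N)) = k := by
      have h1 := (le_div_iff₀ hh).2 ht.1.le
      rw [Nat.floor_eq_iff ((Nat.cast_nonneg k).trans h1)]
      refine ⟨h1, ?_⟩
      have h2 := (div_lt_iff₀ hh).2 ht.2
      exact_mod_cast h2
    simp only [timeIdx, this]
    rw [min_eq_left (by omega)]
  have mono : ∀ k : ℕ, (k:ℝ) * (T / N) ≤ ((k + 1 : ℕ):ℝ) * (T / N) := fun k => by
    push_cast; nlinarith
  have := intervalIntegral.sum_integral_adjacent_intervals (μ := volume)
    (f := fun t => F (timeIdx T N t)) (a := fun k : ℕ => (k:ℝ) * (T / N)) (n := N) ?_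
  · have e : (N:ℝ) * (T / N) = T := by field_simp
    simp only [Nat.cast_zero, zero_mul, e] at this
    rw [← this, Finset.mul_sum]
    refine Finset.sum_congr rfl fun k hk => ?_
    rw [intervalIntegral.integral_congr_Ioo_of_le (mono k) (key k (Finset.mem_range.1 hk)),
      intervalIntegral.integral_const, smul_eq_mul]
    push_cast; ring
  · intro k hk
    rw [intervalIntegrable_iff_integrableOn_Ioo_of_le (mono k)]
    exact (integrableOn_congr_fun (key k hk) measurableSet_Ioo).2
      (integrableOn_const (by simp))

/-- **Lemma 3.3, uniform bounds on the discrete gradients.** For all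
`T > 0`, `L ≥ 0`, `g₀ ≥ 0`, `A > 0`, `B ≥ 0` there is `C ≥ 0` (depending only on
`T, L, g₀, A, B`) and, for each `D ≥ 0`, a constant `C' ≥ 0` (depending additionally
on `D`) such that for every scheme (with `Σ m K ≤ A`, `|g 0| ≤ g₀`,
`E[‖u⁰‖_m²] ≤ B`):
`∫₀^T E[|u^r(t)|₁²] dt = Δt Σ_{k<N} E[|u^{k+1}|₁²] ≤ C`, and if moreover
`E[|u⁰|₁²] ≤ D` then `∫₀^T E[|u^l(t)|₁²] dt ≤ C'`. -/
theorem discrete_gradient_bounds (T L g₀ A B : ℝ)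
    (hT : 0 < T) (hL : 0 ≤ L) (hg₀ : 0 ≤ g₀) (hA : 0 < A) (hB : 0 ≤ B) :
    ∃ C : ℝ, 0 ≤ C ∧ ∀ D : ℝ, 0 ≤ D → ∃ C' : ℝ, 0 ≤ C' ∧
      ∀ (V : Type) [Fintype V] [Nonempty V]
        (Ω : Type) [MeasurableSpace Ω] (g : ℝ → ℝ) (N : ℕ)
        (S : Scheme V Ω T L g N),
        |g 0| ≤ g₀ → (∑ K, S.m K) ≤ A →
        (∫ ω, normSq S.m (S.u 0 ω) ∂S.P) ≤ B →
        ((∫ t in (0:ℝ)..T, ∫ ω, seminormSq S.τ (ur T N S.u t ω) ∂S.P)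
            = (T / N) * ∑ k ∈ Finset.range N,
                ∫ ω, seminormSq S.τ (S.u (k + 1) ω) ∂S.P) ∧
        ((T / N) * ∑ k ∈ Finset.range N,
            ∫ ω, seminormSq S.τ (S.u (k + 1) ω) ∂S.P ≤ C) ∧
        ((∫ ω, seminormSq S.τ (S.u 0 ω) ∂S.P) ≤ D →
          (∫ t in (0:ℝ)..T, ∫ ω, seminormSq S.τ (ul T N S.u t ω) ∂S.P) ≤ C') := by
  have hE : 0 ≤ Real.exp (T * (2 * L ^ 2)) * (B + T * (2 * g₀ ^ 2 * A)) := by positivity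
  refine ⟨Real.exp (T * (2 * L ^ 2)) * (B + T * (2 * g₀ ^ 2 * A)), hE, fun D hD =>
    ⟨T * D + Real.exp (T * (2 * L ^ 2)) * (B + T * (2 * g₀ ^ 2 * A)), by positivity, ?_⟩⟩
  intro V _ _ Ω _ g N S hg hm hu0
  have hN' : (1:ℝ) ≤ N := by exact_mod_cast S.N_pos
  have hh : 0 < T / N := div_pos hT (by linarith)
  have hhT : T / N ≤ T := div_le_self hT.le hN'
  have hint : ∀ n ≤ N, Integrable (fun ω => normSq S.m (S.u n ω)) S.P := by
    intro n
    induction n with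
    | zero => exact fun _ => S.u0_int
    | succ n ih => exact fun hn => (step S g₀ A hg hm n hn (ih (by omega))).1
  have hy : ∀ n, 0 ≤ ∫ ω, seminormSq S.τ (S.u n ω) ∂S.P := fun n =>
    integral_nonneg fun ω => seminormSq_nonneg _ S.τ_nonneg _
  have gr := gronwall (2 * L ^ 2) (2 * g₀ ^ 2 * A) (T / N) B (by positivity) (by positivity)
    hh.le hB (fun n => ∫ ω, normSq S.m (S.u n ω) ∂S.P)
    (fun n => ∫ ω, seminormSq S.τ (S.u n ω) ∂S.P) hy hu0 N
    (fun n hn => (step S g₀ A hg hm n hn (hint n hn.le)).2) N le_rfl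
  have hx : 0 ≤ ∫ ω, normSq S.m (S.u N ω) ∂S.P :=
    integral_nonneg fun ω => normSq_nonneg _ S.m_pos _
  have e : ∀ z : ℝ, (N:ℝ) * (T / N * z) = T * z := fun z => by
    have : (N:ℝ) ≠ 0 := by linarith
    field_simp
  simp only [e] at gr
  have hsum : 0 ≤ (T / N) * ∑ k ∈ Finset.range N, ∫ ω, seminormSq S.τ (S.u (k + 1) ω) ∂S.P :=
    mul_nonneg hh.le (Finset.sum_nonneg fun k _ => hy _)
  have main : (T / N) * ∑ k ∈ Finset.range N, ∫ ω, seminormSq S.τ (S.u (k + 1) ω) ∂S.P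
      ≤ Real.exp (T * (2 * L ^ 2)) * (B + T * (2 * g₀ ^ 2 * A)) := by linarith
  refine ⟨?_, main, fun hD0 => ?_⟩
  · exact time_int T hT N S.N_pos (fun k => ∫ ω, seminormSq S.τ (S.u (k + 1) ω) ∂S.P)
  · have := time_int T hT N S.N_pos (fun k => ∫ ω, seminormSq S.τ (S.u k ω) ∂S.P)
    unfold ul
    rw [this]
    have s1 : ∑ k ∈ Finset.range N, ∫ ω, seminormSq S.τ (S.u k ω) ∂S.P
        ≤ (∑ k ∈ Finset.range N, ∫ ω, seminormSq S.τ (S.u (k + 1) ω) ∂S.P)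
          + ∫ ω, seminormSq S.τ (S.u 0 ω) ∂S.P := by
      rw [← Finset.sum_range_succ' (fun k => ∫ ω, seminormSq S.τ (S.u k ω) ∂S.P),
        Finset.sum_range_succ]
      linarith [hy N]
    have s2 := mul_le_mul_of_nonneg_left s1 hh.le
    have s3 : T / N * (∫ ω, seminormSq S.τ (S.u 0 ω) ∂S.P) ≤ T * D :=
      mul_le_mul hhT hD0 (hy 0) hT.le
    rw [mul_add] at s2
    linarith
end

section
/- Time translate estimate (Lemma 3.6): for all T > 0, L ≥ 0, g₀ ≥ 0, A > 0, B ≥ 0 and D ≥ 0 there exists a constant C ≥ 0, depending only on T, L, g₀, A, B, D, such that for every N ≥ 1, every discrete setting (V, m, τ) with Σ_{K∈V} m K ≤ A, every g Lipschitz with constant L and |g(0)| ≤ g₀, every initial datum with E[‖u⁰‖_m²] ≤ B and E[|u⁰|₁²] ≤ D, and every τ₀ ∈ (0, T): E[∫₀^{T−τ₀} ‖(u^l − M^l)(t+τ₀) − (u^l − M^l)(t)‖_m² dt] ≤ C·τ₀. -/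
open MeasureTheory ProbabilityTheory

/-- Left interpolated discrete stochastic integral
`M^l(t) K = Σ_{k=0}^{n−1} g(u^k K)·ΔW_{k+1}` for `t ∈ [t_n, t_{n+1})`. -/
noncomputable def Ml {Ω V : Type} (T : ℝ) (N : ℕ) (g : ℝ → ℝ)
    (u : ℕ → Ω → V → ℝ) (ΔW : ℕ → Ω → ℝ) (t : ℝ) (ω : Ω) (K : V) : ℝ :=
  ∑ k ∈ Finset.range (timeIdx T N t), g (u k ω K) * ΔW (k + 1) ω

noncomputable def auxLap {V : Type} [Fintype V] (τ : V → V → ℝ) (w : V → ℝ) (K : V) : ℝ :=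
  ∑ L, τ K L * (w K - w L)

noncomputable def auxForm {V : Type} [Fintype V] (τ : V → V → ℝ) (w z : V → ℝ) : ℝ :=
  (1 / 2) * ∑ K, ∑ L, τ K L * ((w K - w L) * (z K - z L))

noncomputable def auxA {V : Type} [Fintype V] (m : V → ℝ) (τ : V → V → ℝ) (w : V → ℝ) : ℝ :=
  ∑ K, auxLap τ w K ^ 2 / m K

lemma seminormSq_eq_auxForm {V : Type} [Fintype V] (τ : V → V → ℝ) (w : V → ℝ) :
    seminormSq τ w = auxForm τ w w := by
  simp only [seminormSq, auxForm, sq]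

lemma auxForm_self_nonneg {V : Type} [Fintype V] (τ : V → V → ℝ)
    (h0 : ∀ K L, 0 ≤ τ K L) (w : V → ℝ) : 0 ≤ auxForm τ w w := by
  unfold auxForm
  refine mul_nonneg (by norm_num) (Finset.sum_nonneg fun K _ => Finset.sum_nonneg fun L _ => ?_)
  exact mul_nonneg (h0 K L) (mul_self_nonneg _)

lemma sum_auxLap_mul {V : Type} [Fintype V] (τ : V → V → ℝ)
    (hs : ∀ K L, τ K L = τ L K) (w z : V → ℝ) :
    ∑ K, auxLap τ w K * z K = auxForm τ w z := by
  have h1 : ∑ K, auxLap τ w K * z K = ∑ K, ∑ L, τ K L * (w K - w L) * z K := by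
    simp only [auxLap, Finset.sum_mul]
  have h2 : ∑ K, auxLap τ w K * z K = ∑ K, ∑ L, τ K L * (w L - w K) * z L := by
    rw [h1, Finset.sum_comm]
    refine Finset.sum_congr rfl fun K _ => Finset.sum_congr rfl fun L _ => ?_
    rw [hs L K]
  have h3 : 2 * ∑ K, auxLap τ w K * z K = ∑ K, ∑ L, τ K L * ((w K - w L) * (z K - z L)) := by
    rw [two_mul]
    nth_rewrite 1 [h1]
    rw [h2, ← Finset.sum_add_distrib]
    refine Finset.sum_congr rfl fun K _ => ?_
    rw [← Finset.sum_add_distrib]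
    refine Finset.sum_congr rfl fun L _ => ?_
    ring
  unfold auxForm
  linarith

lemma auxForm_expand {V : Type} [Fintype V] (τ : V → V → ℝ) (w' w h : V → ℝ) (x : ℝ) :
    auxForm τ (fun K => x * h K - (w' K - w K)) (fun K => x * h K - (w' K - w K))
      = x ^ 2 * auxForm τ h h - 2 * x * auxForm τ w' h + 2 * x * auxForm τ w h
        + 2 * auxForm τ w' (fun K => w' K - w K) - auxForm τ w' w' + auxForm τ w w := by
  unfold auxForm
  simp only [Finset.mul_sum, ← Finset.sum_add_distrib, ← Finset.sum_sub_distrib]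
  refine Finset.sum_congr rfl fun K _ => Finset.sum_congr rfl fun L _ => ?_
  ring

lemma aux_energy {V : Type} [Fintype V] (m : V → ℝ) (hm : ∀ K, 0 < m K) (τ : V → V → ℝ)
    (hs : ∀ K L, τ K L = τ L K) (h0 : ∀ K L, 0 ≤ τ K L) (w' w h : V → ℝ) (x d : ℝ)
    (heq : ∀ K, w' K - w K = h K * x - d * auxLap τ w' K / m K) :
    auxForm τ w' w' + 2 * d * auxA m τ w'
      ≤ auxForm τ w w + 2 * (x * auxForm τ w h) + x ^ 2 * auxForm τ h h := by
  have h1 := auxForm_expand τ w' w h x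
  have h2 := auxForm_self_nonneg τ h0 (fun K => x * h K - (w' K - w K))
  have h3 : auxForm τ w' (fun K => w' K - w K) = x * auxForm τ w' h - d * auxA m τ w' := by
    rw [← sum_auxLap_mul τ hs, ← sum_auxLap_mul τ hs, auxA, Finset.mul_sum, Finset.mul_sum,
      ← Finset.sum_sub_distrib]
    refine Finset.sum_congr rfl fun K _ => ?_
    rw [heq K]
    ring
  nlinarith

lemma aux_l2 {V : Type} [Fintype V] (m : V → ℝ) (hm : ∀ K, 0 < m K) (τ : V → V → ℝ)
    (hs : ∀ K L, τ K L = τ L K) (h0 : ∀ K L, 0 ≤ τ K L) (w' f : V → ℝ) (d : ℝ) (hd : 0 < d)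
    (heq : ∀ K, w' K  = f K - d * auxLap τ w' K / m K) :
    ∑ K, m K * w' K ^ 2 ≤ ∑ K, m K * f K ^ 2 := by
  have h3 : ∑ K, m K * w' K ^ 2 = ∑ K, m K * (f K * w' K) - d * auxForm τ w' w' := by
    rw [← sum_auxLap_mul τ hs, Finset.mul_sum, ← Finset.sum_sub_distrib]
    refine Finset.sum_congr rfl fun K _ => ?_
    have := (hm K).ne'
    have h := heq K
    have h' : m K * w' K = m K * f K - d * auxLap τ w' K := by
      field_simp at h; linarith
    linear_combination (w' K) * h'
  have h4 : ∑ K, m K * (f K * w' K) ≤ (1/2) * ∑ K, m K * w' K ^ 2 + (1/2) * ∑ K, m K * f K ^ 2 := by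
    rw [Finset.mul_sum, Finset.mul_sum, ← Finset.sum_add_distrib]
    refine Finset.sum_le_sum fun K _ => ?_
    nlinarith [mul_nonneg (hm K).le (sq_nonneg (f K - w' K))]
  have h5 := mul_nonneg hd.le (auxForm_self_nonneg τ h0 w')
  linarith

lemma auxForm_lip {V : Type} [Fintype V] (τ : V → V → ℝ) (h0 : ∀ K L, 0 ≤ τ K L)
    (g : ℝ → ℝ) (L : ℝ) (hg : ∀ r s : ℝ, |g r - g s| ≤ L * |r - s|) (w : V → ℝ) :
    auxForm τ (fun K => g (w K)) (fun K => g (w K)) ≤ L ^ 2 * auxForm τ w w := by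
  unfold auxForm
  simp only [Finset.mul_sum]
  refine Finset.sum_le_sum fun K _ => Finset.sum_le_sum fun K' _ => ?_
  have h1 : (g (w K) - g (w K')) * (g (w K) - g (w K')) ≤ L ^ 2 * ((w K - w K') * (w K - w K')) := by
    have := mul_self_le_mul_self (abs_nonneg _) (hg (w K) (w K'))
    rw [abs_mul_abs_self] at this
    have h2 := abs_mul_abs_self (w K - w K')
    nlinarith
  nlinarith [mul_le_mul_of_nonneg_left h1 (h0 K K')]

lemma aux_sum_sq {V : Type} [Fintype V] (m : V → ℝ) (hm : ∀ K, 0 < m K) (τ : V → V → ℝ)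
    (u : ℕ → V → ℝ) (G : ℕ → V → ℝ) (X : ℕ → ℝ) (d : ℝ) (N : ℕ)
    (heq : ∀ n < N, ∀ K, u (n + 1) K - u n K
      = G n K * X (n + 1) - d * auxLap τ (u (n + 1)) K / m K)
    (i j : ℕ) (hij : i ≤ j) (hj : j ≤ N) :
    normSq m (fun K => (u j K - ∑ k ∈ Finset.range j, G k K * X (k + 1))
        - (u i K - ∑ k ∈ Finset.range i, G k K * X (k + 1)))
      ≤ ((j - i : ℕ) * d) * ∑ n ∈ Finset.Ico i j, d * auxA m τ (u (n + 1)) := by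
  have key : ∀ K, (u j K - ∑ k ∈ Finset.range j, G k K * X (k + 1))
        - (u i K - ∑ k ∈ Finset.range i, G k K * X (k + 1))
      = - ∑ n ∈ Finset.Ico i j, d * auxLap τ (u (n + 1)) K / m K := by
    intro K
    induction j, hij using Nat.le_induction with
    | base => simp
    | succ j hij ih =>
      have := ih (by omega)
      rw [Finset.sum_Ico_succ_top hij, Finset.sum_range_succ]
      have h2 := heq j (by omega) K
      linarith
  unfold normSq
  simp only [key, auxA, Finset.mul_sum]
  rw [Finset.sum_comm]
  refine Finset.sum_le_sum fun K _ => ?_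
  have h1 := sq_sum_le_card_mul_sum_sq (s := Finset.Ico i j)
    (f := fun n => d * auxLap τ (u (n + 1)) K / m K)
  have h2 := mul_le_mul_of_nonneg_left h1 (hm K).le
  rw [neg_sq]
  refine h2.trans (le_of_eq ?_)
  rw [Nat.card_Ico, Finset.mul_sum, Finset.mul_sum]
  refine Finset.sum_congr rfl fun n _ => ?_
  have := (hm K).ne'
  field_simp

lemma aux_timeIdx {T : ℝ} (hT : 0 < T) {N : ℕ} (hN : 1 ≤ N) {τ₀ : ℝ} {t : ℝ}
    (ht : 0 ≤ t) (hτ : 0 < τ₀) {n : ℕ} (h1 : timeIdx T N t ≤ n) (h2 : n < timeIdx T N (t + τ₀)) :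
    t ∈ Set.Icc ((n + 1) * (T / N) - τ₀) ((n + 1) * (T / N)) := by
  have hd : 0 < T / N := div_pos hT (by exact_mod_cast hN)
  unfold timeIdx at h1 h2
  have h3 : n + 1 ≤ Nat.floor ((t + τ₀) / (T / N)) := by omega
  have h4 : Nat.floor (t / (T / N)) < n + 1 := by omega
  rw [Nat.le_floor_iff (by positivity), le_div_iff₀ hd] at h3
  rw [Nat.floor_lt (by positivity), div_lt_iff₀ hd] at h4
  push_cast at h3 h4
  constructor <;> linarith

lemma aux_timeIdx_mono {T : ℝ} (hT : 0 < T) {N : ℕ} {τ₀ : ℝ} {t : ℝ}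
    (hτ : 0 < τ₀) : timeIdx T N t ≤ timeIdx T N (t + τ₀) := by
  unfold timeIdx
  gcongr
  linarith

/-- pathwise estimate -/
lemma aux_path {V : Type} [Fintype V] (m : V → ℝ) (hm : ∀ K, 0 < m K) (τ : V → V → ℝ)
    (u : ℕ → V → ℝ) (G : ℕ → V → ℝ) (X : ℕ → ℝ) (T : ℝ) (hT : 0 < T) (N : ℕ) (hN : 1 ≤ N)
    (heq : ∀ n < N, ∀ K, u (n + 1) K - u n K
      = G n K * X (n + 1) - (T / N) * auxLap τ (u (n + 1)) K / m K)
    (τ₀ : ℝ) (hτ : 0 < τ₀) (hτT : τ₀ < T) :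
    ∫ t in (0:ℝ)..(T - τ₀), normSq m (fun K =>
        (u (timeIdx T N (t + τ₀)) K - ∑ k ∈ Finset.range (timeIdx T N (t + τ₀)), G k K * X (k + 1))
        - (u (timeIdx T N t) K - ∑ k ∈ Finset.range (timeIdx T N t), G k K * X (k + 1)))
      ≤ (T * τ₀) * ∑ n ∈ Finset.range N, (T / N) * auxA m τ (u (n + 1)) := by
  have hd : 0 < T / N := div_pos hT (by exact_mod_cast hN)
  have hA : ∀ n, 0 ≤ (T / N) * auxA m τ (u (n + 1)) := fun n =>
    mul_nonneg hd.le (Finset.sum_nonneg fun K _ => div_nonneg (sq_nonneg _) (hm K).le)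
  set c : ℕ → ℝ := fun n => (T / N) * auxA m τ (u (n + 1)) with hc
  let I : ℕ → Set ℝ := fun n => Set.Icc ((n + 1) * (T / N) - τ₀) ((n + 1) * (T / N))
  have hint : ∀ n, Integrable ((I n).indicator (fun _ => T * c n)) (volume : Measure ℝ) := by
    intro n
    rw [integrable_indicator_iff measurableSet_Icc]
    exact integrableOn_const (by simp)
  have hval : ∀ n, ∫ t, (I n).indicator (fun _ => T * c n) t = T * τ₀ * c n := by
    intro n
    rw [integral_indicator measurableSet_Icc, setIntegral_const]
    simp [hτ.le]
    ring
  have hnn : ∀ n t, 0 ≤ (I n).indicator (fun _ => T * c n) t := fun n t =>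
    Set.indicator_nonneg (fun _ _ => mul_nonneg hT.le (hA n)) t
  rw [intervalIntegral.integral_of_le (by linarith)]
  calc _ ≤ ∫ t in Set.Ioc 0 (T - τ₀), ∑ n ∈ Finset.range N, (I n).indicator (fun _ => T * c n) t := by
        refine integral_mono_of_nonneg ?_ ?_ ?_
        · exact Filter.Eventually.of_forall fun t =>
            Finset.sum_nonneg fun K _ => mul_nonneg (hm K).le (sq_nonneg _)
        · exact integrable_finsetSum _ fun n _ => (hint n).restrict
        · refine (ae_restrict_iff' measurableSet_Ioc).2 (Filter.Eventually.of_forall fun t ht => ?_)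
          have hjN : timeIdx T N (t + τ₀) ≤ N := by unfold timeIdx; omega
          have hij := aux_timeIdx_mono hT (N := N) (t := t) hτ
          have h1 := aux_sum_sq m hm τ u G X (T / N) N heq _ _ hij hjN
          refine h1.trans ?_
          have h2 : ((timeIdx T N (t + τ₀) - timeIdx T N t : ℕ) : ℝ) * (T / N) ≤ T := by
            have : ((timeIdx T N (t + τ₀) - timeIdx T N t : ℕ) : ℝ) ≤ N := by
              exact_mod_cast (by omega)
            have hN' : (N : ℝ) ≠ 0 := by positivity
            calc _ ≤ (N : ℝ) * (T / N) := by gcongr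
              _ = T := by field_simp
          refine (mul_le_mul_of_nonneg_right h2 (Finset.sum_nonneg fun n _ => hA n)).trans ?_
          rw [Finset.mul_sum]
          calc _ ≤ ∑ n ∈ Finset.Ico (timeIdx T N t) (timeIdx T N (t + τ₀)),
                  (I n).indicator (fun _ => T * c n) t := by
                refine Finset.sum_le_sum fun n hn => ?_
                rw [Finset.mem_Ico] at hn
                rw [Set.indicator_of_mem (aux_timeIdx hT hN ht.1.le hτ hn.1 hn.2)]
            _ ≤ _ := by
                refine Finset.sum_le_sum_of_subset_of_nonneg ?_ fun n _ _ => hnn n t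
                intro n hn
                rw [Finset.mem_Ico] at hn
                rw [Finset.mem_range]; omega
    _ ≤ ∫ t, ∑ n ∈ Finset.range N, (I n).indicator (fun _ => T * c n) t := by
        refine setIntegral_le_integral (integrable_finsetSum _ fun n _ => hint n) ?_
        exact Filter.Eventually.of_forall fun t => Finset.sum_nonneg fun n _ => hnn n t
    _ = _ := by
        rw [integral_finsetSum _ fun n _ => hint n, Finset.mul_sum]
        exact Finset.sum_congr rfl fun n _ => hval n

lemma auxForm_integrable {V Ω : Type} [Fintype V] [MeasurableSpace Ω] {P : Measure Ω}
    (τ : V → V → ℝ) {X Y : Ω → V → ℝ} (hX : ∀ K, MemLp (fun ω => X ω K) 2 P)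
    (hY : ∀ K, MemLp (fun ω => Y ω K) 2 P) :
    Integrable (fun ω => auxForm τ (X ω) (Y ω)) P := by
  unfold auxForm
  refine Integrable.const_mul (integrable_finsetSum _ fun K _ => integrable_finsetSum _ fun K' _ =>
    Integrable.const_mul ?_ _) _
  exact ((hX K).sub (hX K')).integrable_mul ((hY K).sub (hY K'))

lemma auxA_integrable {V Ω : Type} [Fintype V] [MeasurableSpace Ω] {P : Measure Ω}
    (m : V → ℝ) (τ : V → V → ℝ) {X : Ω → V → ℝ} (hX : ∀ K, MemLp (fun ω => X ω K) 2 P) :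
    Integrable (fun ω => auxA m τ (X ω)) P := by
  unfold auxA auxLap
  refine integrable_finsetSum _ fun K _ => Integrable.div_const ?_ _
  refine MemLp.integrable_sq ?_
  exact memLp_finsetSum _ fun K' _ => ((hX K).sub (hX K')).const_mul _

section schemeLemmas
variable {V Ω : Type} [Fintype V] [Nonempty V] [mΩ : MeasurableSpace Ω] {T L : ℝ} {g : ℝ → ℝ}
  {N : ℕ} (S : Scheme V Ω T L g N)

lemma Scheme.dt_pos (S : Scheme V Ω T L g N) : 0 < T / N := div_pos S.T_pos (by exact_mod_cast S.N_pos)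

lemma Scheme.eqn (n : ℕ) (hn : n < N) : ∀ᵐ ω ∂S.P, ∀ K,
    S.u (n + 1) ω K - S.u n ω K = g (S.u n ω K) * S.ΔW (n + 1) ω
      - (T / N) * auxLap S.τ (S.u (n + 1) ω) K / S.m K := by
  filter_upwards [S.scheme n hn] with ω hω K
  have h := hω K
  have hd := S.dt_pos
  have hm := S.m_pos K
  change _ + auxLap S.τ (S.u (n + 1) ω) K = _ at h
  generalize T / (N : ℝ) = d at *
  field_simp at h ⊢
  linarith

lemma Scheme.g_cont (S : Scheme V Ω T L g N) : Continuous g := by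
  have : LipschitzWith (Real.toNNReal L) g := by
    refine LipschitzWith.of_dist_le_mul fun x y => ?_
    rw [Real.dist_eq, Real.dist_eq, Real.coe_toNNReal _ S.L_nonneg]
    exact S.g_lip x y
  exact this.continuous

lemma Scheme.u_meas' (n : ℕ) (hn : n ≤ N) (K : V) : Measurable[S.G n] (fun ω => S.u n ω K) :=
  @Measurable.comp _ _ _ (S.G n) _ _ _ _ (measurable_pi_apply K) (S.u_meas n hn)

lemma Scheme.W_meas (n : ℕ) (hn : n < N) : Measurable (S.ΔW (n + 1)) :=
  (S.ΔW_meas n hn).mono (S.G_le _) le_rfl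

lemma Scheme.W_memLp (n : ℕ) (hn : n < N) : MemLp (S.ΔW (n + 1)) 2 S.P := by
  have h := memLp_id_gaussianReal' (μ := 0) (v := Real.toNNReal (T / N)) 2 (by simp)
  rw [← S.ΔW_law n hn] at h
  exact (memLp_map_measure_iff aestronglyMeasurable_id (S.W_meas n hn).aemeasurable).1 h

lemma Scheme.W_mean (n : ℕ) (hn : n < N) : ∫ ω, S.ΔW (n + 1) ω ∂S.P = 0 := by
  have h := integral_id_gaussianReal (μ := 0) (v := Real.toNNReal (T / N))
  rw [← S.ΔW_law n hn, integral_map (S.W_meas n hn).aemeasurable (by fun_prop)] at h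
  exact h

lemma Scheme.W_var (n : ℕ) (hn : n < N) : ∫ ω, S.ΔW (n + 1) ω ^ 2 ∂S.P = T / N := by
  have h := variance_fun_id_gaussianReal (μ := 0) (v := Real.toNNReal (T / N))
  rw [variance_eq_integral (by fun_prop), integral_id_gaussianReal] at h
  rw [← S.ΔW_law n hn, integral_map (S.W_meas n hn).aemeasurable (by fun_prop)] at h
  simpa [S.dt_pos.le] using h

lemma Scheme.indepFun (n : ℕ) (hn : n < N) (Y : Ω → ℝ) (hY : Measurable[S.G n] Y) :
    IndepFun (S.ΔW (n + 1)) Y S.P := by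
  rw [IndepFun_iff_Indep]
  exact indep_of_indep_of_le_right (S.ΔW_indep n hn) hY.comap_le

lemma Scheme.indepFun_sq (n : ℕ) (hn : n < N) (Y : Ω → ℝ) (hY : Measurable[S.G n] Y) :
    IndepFun (fun ω => S.ΔW (n + 1) ω ^ 2) Y S.P :=
  (S.indepFun n hn Y hY).comp (φ := fun x : ℝ => x ^ 2) (ψ := id) (by fun_prop) measurable_id

lemma Scheme.g_meas (n : ℕ) (hn : n ≤ N) (K : V) :
    Measurable[S.G n] (fun ω => g (S.u n ω K)) :=
  @Measurable.comp _ _ _ (S.G n) _ _ _ _ S.g_cont.measurable (S.u_meas' n hn K)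

lemma Scheme.g_memLp (n : ℕ) (hn : n ≤ N) (K : V) (h : MemLp (fun ω => S.u n ω K) 2 S.P) :
    MemLp (fun ω => g (S.u n ω K)) 2 S.P := by
  have := S.probP
  have h1 : MemLp (fun ω => |g 0| + L * |S.u n ω K|) 2 S.P :=
    MemLp.add (f := fun _ => |g 0|) (g := fun ω => L * |S.u n ω K|) (memLp_const _)
      (MemLp.const_mul (f := fun ω => |S.u n ω K|) h.abs L)
  refine h1.mono ((S.g_meas n hn K).mono (S.G_le n) le_rfl).aestronglyMeasurable
    (Filter.Eventually.of_forall fun ω => ?_)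
  have h2 := S.g_lip (S.u n ω K) 0
  rw [sub_zero] at h2
  have h3 := abs_sub_abs_le_abs_sub (g (S.u n ω K)) (g 0)
  rw [Real.norm_eq_abs, Real.norm_eq_abs]
  refine le_trans ?_ (le_abs_self _)
  linarith

lemma Scheme.u_memLp (n : ℕ) (hn : n ≤ N) : ∀ K, MemLp (fun ω => S.u n ω K) 2 S.P := by
  have := S.probP
  have of_bound : ∀ n ≤ N, ∀ F : Ω → ℝ, Integrable F S.P →
      (∀ᵐ ω ∂S.P, normSq S.m (S.u n ω) ≤ F ω) → ∀ K, MemLp (fun ω => S.u n ω K) 2 S.P := by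
    intro n hn F hF hle K
    have hmeas : Measurable (fun ω => S.u n ω K) := (S.u_meas' n hn K).mono (S.G_le n) le_rfl
    rw [memLp_two_iff_integrable_sq hmeas.aestronglyMeasurable]
    refine (hF.div_const (S.m K)).mono' (by fun_prop) ?_
    filter_upwards [hle] with ω hω
    rw [Real.norm_eq_abs, abs_of_nonneg (sq_nonneg _), le_div_iff₀ (S.m_pos K), mul_comm]
    refine le_trans ?_ hω
    exact Finset.single_le_sum (f := fun K => S.m K * S.u n ω K ^ 2)
      (fun K _ => mul_nonneg (S.m_pos K).le (sq_nonneg _)) (Finset.mem_univ K)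
  induction n with
  | zero => exact of_bound 0 hn _ S.u0_int (Filter.Eventually.of_forall fun ω => le_rfl)
  | succ n ih =>
    have ih := ih (by omega)
    have hn' : n < N := by omega
    refine of_bound (n + 1) hn
      (fun ω => ∑ K, S.m K * (S.u n ω K + g (S.u n ω K) * S.ΔW (n + 1) ω) ^ 2) ?_ ?_
    · refine integrable_finsetSum _ fun K _ => Integrable.const_mul ?_ _
      refine MemLp.integrable_sq ((ih K).add ?_)
      have hgm : Measurable (fun ω => g (S.u n ω K)) :=
        (S.g_meas n hn'.le K).mono (S.G_le n) le_rfl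
      have hW := S.W_meas n hn'
      refine (memLp_two_iff_integrable_sq (hgm.mul hW).aestronglyMeasurable).2 ?_
      have hg2 : Measurable[S.G n] (fun ω => g (S.u n ω K) ^ 2) :=
        (S.g_meas n hn'.le K).pow_const 2
      have := (S.indepFun_sq n hn' _ hg2).integrable_mul (S.W_memLp n hn').integrable_sq
        (S.g_memLp n hn'.le K (ih K)).integrable_sq
      refine this.congr (Filter.Eventually.of_forall fun ω => ?_)
      simp only [Pi.mul_apply]
      ring
    · filter_upwards [S.eqn n hn'] with ω hω
      refine aux_l2 S.m S.m_pos S.τ S.τ_symm S.τ_nonneg _ _ (T / N) S.dt_pos fun K => ?_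
      linarith [hω K]

lemma Scheme.form_meas (n : ℕ) (X Y : Ω → V → ℝ)
    (hX : ∀ K, Measurable[S.G n] (fun ω => X ω K)) (hY : ∀ K, Measurable[S.G n] (fun ω => Y ω K)) :
    Measurable[S.G n] (fun ω => auxForm S.τ (X ω) (Y ω)) := by
  unfold auxForm
  let := S.G n
  fun_prop

lemma Scheme.energy_step (n : ℕ) (hn : n < N) :
    (∫ ω, auxForm S.τ (S.u (n + 1) ω) (S.u (n + 1) ω) ∂S.P)
      + 2 * ((T / N) * ∫ ω, auxA S.m S.τ (S.u (n + 1) ω) ∂S.P)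
      ≤ (1 + L ^ 2 * (T / N)) * ∫ ω, auxForm S.τ (S.u n ω) (S.u n ω) ∂S.P := by
  have := S.probP
  have hu := S.u_memLp n hn.le
  have hu' := S.u_memLp (n + 1) hn
  have hg := fun K => S.g_memLp n hn.le K (hu K)
  have i1 := auxForm_integrable S.τ hu' hu'
  have i2 := auxA_integrable S.m S.τ hu'
  have i3 := auxForm_integrable S.τ hu hu
  have i4 := auxForm_integrable S.τ hu hg
  have i5 := auxForm_integrable S.τ hg hg
  have m4 := S.form_meas n _ _ (S.u_meas' n hn.le) (S.g_meas n hn.le)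
  have m5 := S.form_meas n _ _ (S.g_meas n hn.le) (S.g_meas n hn.le)
  have ind4 := S.indepFun n hn _ m4
  have ind5 := S.indepFun_sq n hn _ m5
  have j4 := ind4.integrable_mul ((S.W_memLp n hn).integrable one_le_two) i4
  have j5 := ind5.integrable_mul (S.W_memLp n hn).integrable_sq i5
  have e4 := ind4.integral_mul_eq_mul_integral (S.W_meas n hn).aestronglyMeasurable
    i4.aestronglyMeasurable
  have e5 := ind5.integral_mul_eq_mul_integral
    ((S.W_meas n hn).pow_const 2).aestronglyMeasurable i5.aestronglyMeasurable
  rw [S.W_mean n hn, zero_mul] at e4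
  rw [S.W_var n hn] at e5
  have h5 : ∫ ω, auxForm S.τ (fun K => g (S.u n ω K)) (fun K => g (S.u n ω K)) ∂S.P
      ≤ L ^ 2 * ∫ ω, auxForm S.τ (S.u n ω) (S.u n ω) ∂S.P := by
    rw [← integral_const_mul]
    exact integral_mono i5 (i3.const_mul _) fun ω => auxForm_lip S.τ S.τ_nonneg g L S.g_lip _
  have main := integral_mono_ae (i1.add (i2.const_mul (2 * (T / N))))
    ((i3.add (j4.const_mul 2)).add j5) (by
      filter_upwards [S.eqn n hn] with ω hω
      exact aux_energy S.m S.m_pos S.τ S.τ_symm S.τ_nonneg _ _ (fun K => g (S.u n ω K))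
        (S.ΔW (n + 1) ω) (T / N) hω)
  rw [integral_add' i1 (i2.const_mul _), integral_add' (i3.add (j4.const_mul 2)) j5,
    integral_add' i3 (j4.const_mul 2), integral_const_mul, integral_const_mul, e4, e5] at main
  have h6 := mul_le_mul_of_nonneg_left h5 S.dt_pos.le
  linarith

lemma Scheme.energy (n : ℕ) (hn : n ≤ N) :
    (∫ ω, auxForm S.τ (S.u n ω) (S.u n ω) ∂S.P)
      + 2 * ∑ k ∈ Finset.range n, (T / N) * ∫ ω, auxA S.m S.τ (S.u (k + 1) ω) ∂S.P
      ≤ (1 + L ^ 2 * (T / N)) ^ n * ∫ ω, auxForm S.τ (S.u 0 ω) (S.u 0 ω) ∂S.P := by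
  have hd := S.dt_pos
  have hA : ∀ k, 0 ≤ ∫ ω, auxA S.m S.τ (S.u (k + 1) ω) ∂S.P := fun k =>
    integral_nonneg fun ω => Finset.sum_nonneg fun K _ => div_nonneg (sq_nonneg _) (S.m_pos K).le
  induction n with
  | zero => simp
  | succ n ih =>
    have ih := ih (by omega)
    have h1 := S.energy_step n hn
    rw [Finset.sum_range_succ, pow_succ']
    have h2 : 0 ≤ L ^ 2 * (T / N) := by positivity
    have h3 : 0 ≤ ∑ k ∈ Finset.range n, (T / N) * ∫ ω, auxA S.m S.τ (S.u (k + 1) ω) ∂S.P :=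
      Finset.sum_nonneg fun k _ => mul_nonneg hd.le (hA k)
    have h4 := mul_le_mul_of_nonneg_left ih (by linarith : 0 ≤ 1 + L ^ 2 * (T / N))
    nlinarith [mul_nonneg h2 h3]

end schemeLemmas

/-- **Lemma 3.6, time translate estimate.** For all `T > 0`, `L ≥ 0`,
`g₀ ≥ 0`, `A > 0`, `B ≥ 0`, `D ≥ 0` there is a constant `C ≥ 0`, depending only on
`T, L, g₀, A, B, D`, such that for every scheme (with `Σ m K ≤ A`, `|g 0| ≤ g₀`,
`E[‖u⁰‖_m²] ≤ B`, `E[|u⁰|₁²] ≤ D`) and every `τ₀ ∈ (0, T)`: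
`E[∫₀^{T−τ₀} ‖(u^l − M^l)(t+τ₀) − (u^l − M^l)(t)‖_m² dt] ≤ C·τ₀`. -/
theorem time_translate_estimate_Ml (T L g₀ A B D : ℝ)
    (hT : 0 < T) (hL : 0 ≤ L) (hg₀ : 0 ≤ g₀) (hA : 0 < A) (hB : 0 ≤ B) (hD : 0 ≤ D) :
    ∃ C : ℝ, 0 ≤ C ∧
      ∀ (V : Type) [Fintype V] [Nonempty V]
        (Ω : Type) [MeasurableSpace Ω] (g : ℝ → ℝ) (N : ℕ)
        (S : Scheme V Ω T L g N),
        |g 0| ≤ g₀ → (∑ K, S.m K) ≤ A →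
        (∫ ω, normSq S.m (S.u 0 ω) ∂S.P) ≤ B →
        (∫ ω, seminormSq S.τ (S.u 0 ω) ∂S.P) ≤ D →
        ∀ τ₀ : ℝ, 0 < τ₀ → τ₀ < T →
          (∫ ω, (∫ t in (0:ℝ)..(T - τ₀),
              normSq S.m (fun K =>
                (ul T N S.u (t + τ₀) ω K - Ml T N g S.u S.ΔW (t + τ₀) ω K)
                  - (ul T N S.u t ω K - Ml T N g S.u S.ΔW t ω K))) ∂S.P)
            ≤ C * τ₀ := by
  refine ⟨T * (Real.exp (L ^ 2 * T) * D), by positivity, ?_⟩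
  intro V _ _ Ω _ g N S _ _ _ hSD τ₀ hτ hτT
  have hd := S.dt_pos
  have hN' : (N : ℝ) ≠ 0 := by
    have := S.N_pos
    positivity
  have hint : ∀ n ∈ Finset.range N,
      Integrable (fun ω => (T / N) * auxA S.m S.τ (S.u (n + 1) ω)) S.P := fun n hn =>
    (auxA_integrable S.m S.τ (S.u_memLp (n + 1) (Finset.mem_range.1 hn))).const_mul _
  have heqn : ∀ᵐ ω ∂S.P, ∀ n < N, ∀ K,
      S.u (n + 1) ω K - S.u n ω K = g (S.u n ω K) * S.ΔW (n + 1) ω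
      - (T / N) * auxLap S.τ (S.u (n + 1) ω) K / S.m K := by
    rw [ae_all_iff]
    intro n
    by_cases hn : n < N
    · filter_upwards [S.eqn n hn] with ω hω _ using hω
    · exact Filter.Eventually.of_forall fun ω h => absurd h hn
  have h1 : (∫ ω, (∫ t in (0:ℝ)..(T - τ₀),
              normSq S.m (fun K =>
                (ul T N S.u (t + τ₀) ω K - Ml T N g S.u S.ΔW (t + τ₀) ω K)
                  - (ul T N S.u t ω K - Ml T N g S.u S.ΔW t ω K))) ∂S.P)
      ≤ ∫ ω, (T * τ₀) * ∑ n ∈ Finset.range N, (T / N) * auxA S.m S.τ (S.u (n + 1) ω) ∂S.P := by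
    refine integral_mono_of_nonneg ?_ ?_ ?_
    · refine Filter.Eventually.of_forall fun ω => ?_
      refine intervalIntegral.integral_nonneg (by linarith) fun t _ => ?_
      exact Finset.sum_nonneg fun K _ => mul_nonneg (S.m_pos K).le (sq_nonneg _)
    · exact (integrable_finsetSum _ hint).const_mul _
    · filter_upwards [heqn] with ω hω
      exact aux_path S.m S.m_pos S.τ (fun n => S.u n ω) (fun n K => g (S.u n ω K))
        (fun n => S.ΔW n ω) T hT N S.N_pos hω τ₀ hτ hτT
  refine h1.trans ?_
  rw [integral_const_mul, integral_finsetSum _ hint]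
  simp only [integral_const_mul]
  have h2 := S.energy N le_rfl
  simp only [seminormSq_eq_auxForm] at hSD
  have h3 : 0 ≤ ∫ ω, auxForm S.τ (S.u N ω) (S.u N ω) ∂S.P :=
    integral_nonneg fun ω => auxForm_self_nonneg S.τ S.τ_nonneg _
  have h4 : (1 + L ^ 2 * (T / N)) ^ N ≤ Real.exp (L ^ 2 * T) := by
    have h5 := Real.add_one_le_exp (L ^ 2 * (T / N))
    calc (1 + L ^ 2 * (T / N)) ^ N ≤ Real.exp (L ^ 2 * (T / N)) ^ N := by
          gcongr
          linarith
      _ = Real.exp (L ^ 2 * T) := by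
          rw [← Real.exp_nat_mul]
          congr 1
          field_simp
  have h6 : (1 + L ^ 2 * (T / N)) ^ N * ∫ ω, auxForm S.τ (S.u 0 ω) (S.u 0 ω) ∂S.P
      ≤ Real.exp (L ^ 2 * T) * D :=
    mul_le_mul h4 hSD (integral_nonneg fun ω => auxForm_self_nonneg S.τ S.τ_nonneg _)
      (Real.exp_pos _).le
  have h7 : 0 ≤ ∑ k ∈ Finset.range N, (T / N) * ∫ ω, auxA S.m S.τ (S.u (k + 1) ω) ∂S.P :=
    Finset.sum_nonneg fun k _ => mul_nonneg hd.le (integral_nonneg fun ω =>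
      Finset.sum_nonneg fun K _ => div_nonneg (sq_nonneg _) (S.m_pos K).le)
  calc _ ≤ T * τ₀ * (Real.exp (L ^ 2 * T) * D) := by
        gcongr
        linarith
    _ = _ := by ring
end
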